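/- For every p ≥ 0 there is a constant C > 0, depending only on f, D and p, such that for every ν ∈ (0,1] and every ℓ ∈ (0,1], the structure function satisfies S_p(ℓ) ≤ C ℓ^p if 0 ≤ p ≤ 1, and S_p(ℓ) ≤ C ℓ^p ν^{−(p−1)} if p ≥ 1. -/

import Mathlib

/-!
Write `uₓ` for the space derivative and `F = f(u) - ν uₓ` for the flux, so that `uₜ = -Fₓ` and
`∂ₜuₓ = -Fₓₓ`. Both `uₓ` and `F` obey the maximum principle: at a spatial maximum of `uₓ` convexity
of `f` gives `Fₓₓ ≥ 0`, and at a spatial maximum of `F` one has `uₜ = 0`, whence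
`Fₜ = ν Fₓₓ ≤ 0`. The first fact gives Oleinik's one-sided bound `uₓ ≤ D`, hence `|u| ≤ D` because
`u` has mean zero; the second bounds `ν uₓ` from below by a constant depending only on `f` and `D`.

The increments `u(x + ℓ) - u(x)` have mean zero and are at most `D ℓ`, so their `L¹` norm is at
most `2 D ℓ`. Jensen's inequality settles `p ≤ 1`; for `p ≥ 1` one interpolates with the uniform
bound `|u(x + ℓ) - u(x)| ≤ C ℓ / ν`.
-/


open MeasureTheory Set
open scoped ENNReal

/-- The `L^p` norm (on the circle, i.e. over one period `(0,1]`) of the `m`-th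
derivative of a function `v : ℝ → ℝ` (identified with a function on `S¹ = ℝ/ℤ`). -/
noncomputable def sobLp (m : ℕ) (p : ℝ≥0∞) (v : ℝ → ℝ) : ℝ :=
  (eLpNorm (iteratedDeriv m v) p (volume.restrict (Ioc (0:ℝ) 1))).toReal

/-- `u` is a smooth, space-periodic, zero-mean-value solution of the generalised
Burgers equation `u_t + f'(u) u_x - ν u_xx = 0` with strongly convex `f` and
nonzero initial condition. -/
structure IsBurgersSolution (f : ℝ → ℝ) (σ ν : ℝ) (u : ℝ → ℝ → ℝ) : Prop where
  hf : ContDiff ℝ (⊤ : ℕ∞) f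
  hσ : 0 < σ
  hconv : ∀ y, σ ≤ iteratedDeriv 2 f y
  hν : 0 < ν
  hu : ContDiffOn ℝ (⊤ : ℕ∞) (Function.uncurry u) (Ici (0:ℝ) ×ˢ univ)
  hper : ∀ t x, u t (x + 1) = u t x
  hpde : ∀ t, 0 < t → ∀ x,
    deriv (fun s => u s x) t + deriv f (u t x) * deriv (u t) x
      - ν * deriv (deriv (u t)) x = 0
  hmean : ∀ t, 0 ≤ t → ∫ x in Ioc (0:ℝ) 1, u t x = 0
  hinit : ∃ x, u 0 x ≠ 0

/-- The quantity `D = max(|u₀|₁⁻¹, |u₀|_{1,∞})`. -/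
noncomputable def burgersD (u : ℝ → ℝ → ℝ) : ℝ :=
  max (sobLp 0 1 (u 0))⁻¹ (sobLp 1 ⊤ (u 0))

/-- `T₁ = D⁻² C̃⁻¹ / 4`. -/
noncomputable def burgersT₁ (D Ct : ℝ) : ℝ := (D ^ 2)⁻¹ * Ct⁻¹ / 4

/-- `T₂ = max(3T₁/2, 2Dσ⁻¹)`. -/
noncomputable def burgersT₂ (σ D Ct : ℝ) : ℝ :=
  max (3 / 2 * burgersT₁ D Ct) (2 * D * σ⁻¹)

/-- Time average over `[T₁, T₂]`. -/
noncomputable def timeAvg (T₁ T₂ : ℝ) (A : ℝ → ℝ) : ℝ :=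
  (T₂ - T₁)⁻¹ * ∫ t in T₁..T₂, A t

/-- The structure function `S_p(ℓ)`. -/
noncomputable def structFun (T₁ T₂ : ℝ) (u : ℝ → ℝ → ℝ) (p ℓ : ℝ) : ℝ :=
  timeAvg T₁ T₂ (fun t => ∫ x in Ioc (0:ℝ) 1, |u t (x + ℓ) - u t x| ^ p)

/-! ### Maxima and the maximum principle -/

lemma deriv_deriv_nonpos_of_isLocalMax {g : ℝ → ℝ} {x : ℝ} (hmax : IsLocalMax g x)
    (hg : ContinuousAt g x) : deriv (deriv g) x ≤ 0 := by
  by_contra! hpos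
  have hmin : IsLocalMin g x := isLocalMin_of_deriv_deriv_pos hpos hmax.deriv_eq_zero hg
  have hconst : g =ᶠ[nhds x] fun _ => g x := by
    filter_upwards [hmax, hmin] with y hle hge using le_antisymm hle hge
  have hzero : deriv (deriv g) x = 0 := by simpa using hconst.deriv.deriv_eq
  exact hpos.ne' hzero

lemma hasDerivWithinAt_nonneg_of_isLocalMaxOn_Iic {g : ℝ → ℝ} {a t : ℝ}
    (hmax : IsLocalMaxOn g (Iic t) t) (hg : HasDerivWithinAt g a (Iic t) t) : 0 ≤ a := by
  have hcone : (-1 : ℝ) ∈ posTangentConeAt (Iic t) t := by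
    refine mem_posTangentConeAt_of_segment_subset ?_
    rw [segment_symm, segment_eq_Icc (by linarith)]
    exact Icc_subset_Iic_self
  simpa using hmax.hasFDerivWithinAt_nonpos hg.hasFDerivWithinAt hcone

section MaximumPrinciple

variable {w : ℝ → ℝ → ℝ} {c M : ℝ}

lemma le_of_deriv_neg_at_isLocalMax (hc : 0 < c)
    (hcont : ContinuousOn (Function.uncurry w) (Ici 0 ×ˢ univ))
    (hper : ∀ t, Function.Periodic (w t) c)
    (hder : ∀ t, 0 < t → ∀ x, IsLocalMax (w t) x → ∃ a < 0, HasDerivAt (fun s => w s x) a t)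
    (hinit : ∀ x, w 0 x ≤ M) {t : ℝ} (ht : 0 ≤ t) (x : ℝ) : w t x ≤ M := by
  obtain ⟨⟨t₀, x₀⟩, ⟨ht₀ : t₀ ∈ Icc 0 t, -⟩, hmax⟩ :=
    (isCompact_Icc.prod isCompact_Icc).exists_isMaxOn (s := Icc 0 t ×ˢ Icc 0 c)
      ⟨(0, 0), ⟨le_rfl, ht⟩, le_rfl, hc.le⟩
      (hcont.mono (prod_mono Icc_subset_Ici_self (subset_univ _)))
  have hle : ∀ s ∈ Icc 0 t, ∀ y, w s y ≤ w t₀ x₀ := by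
    intro s hs y
    obtain ⟨y', hy', hyy'⟩ := (hper s).exists_mem_Ico₀ hc y
    rw [hyy']
    exact hmax (show (s, y') ∈ Icc 0 t ×ˢ Icc 0 c from ⟨hs, Ico_subset_Icc_self hy'⟩)
  have ht₀_eq : t₀ = 0 := by
    by_contra hne
    have hpos : 0 < t₀ := lt_of_le_of_ne ht₀.1 (Ne.symm hne)
    obtain ⟨a, ha, hda⟩ := hder t₀ hpos x₀ (Filter.Eventually.of_forall (hle t₀ ht₀))
    have hleft : IsLocalMaxOn (fun s => w s x₀) (Iic t₀) t₀ := by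
      filter_upwards [self_mem_nhdsWithin, mem_nhdsWithin_of_mem_nhds (Ioi_mem_nhds hpos)]
        with s hs hs0 using hle s ⟨hs0.le, hs.trans ht₀.2⟩ x₀
    exact ha.not_ge (hasDerivWithinAt_nonneg_of_isLocalMaxOn_Iic hleft hda.hasDerivWithinAt)
  subst ht₀_eq
  exact (hle t ⟨ht, le_rfl⟩ x).trans (hinit x₀)

theorem le_of_deriv_nonpos_at_isLocalMax (hc : 0 < c)
    (hcont : ContinuousOn (Function.uncurry w) (Ici 0 ×ˢ univ))
    (hper : ∀ t, Function.Periodic (w t) c)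
    (hder : ∀ t, 0 < t → ∀ x, IsLocalMax (w t) x → ∃ a ≤ 0, HasDerivAt (fun s => w s x) a t)
    (hinit : ∀ x, w 0 x ≤ M) {t : ℝ} (ht : 0 ≤ t) (x : ℝ) : w t x ≤ M := by
  have hperturbed : ∀ ε > 0, w t x - ε * t ≤ M := by
    intro ε hε
    refine le_of_deriv_neg_at_isLocalMax (w := fun s y => w s y - ε * s) hc ?_ ?_ ?_ ?_ ht x
    · exact hcont.sub (by fun_prop)
    · exact fun s y => by simp only [hper s y]
    · intro s hs y hy
      obtain ⟨a, ha, hda⟩ := hder s hs y (by simpa [IsLocalMax, IsMaxFilter] using hy)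
      exact ⟨a - ε * 1, by linarith, hda.sub ((hasDerivAt_id s).const_mul ε)⟩
    · simpa using hinit
  have hlim : Filter.Tendsto (fun ε => w t x - ε * t) (nhdsWithin 0 (Ioi 0)) (nhds (w t x)) := by
    have : Continuous fun ε => w t x - ε * t := by fun_prop
    simpa using (this.tendsto 0).mono_left nhdsWithin_le_nhds
  exact le_of_tendsto hlim (eventually_mem_nhdsWithin.mono hperturbed)

end MaximumPrinciple

/-! ### Partial derivatives of functions of time and space -/

section PartialDerivatives

variable {u : ℝ → ℝ → ℝ} {t x : ℝ}

lemma hasDerivAt_prodMk_left (t x : ℝ) : HasDerivAt (fun s => (s, x)) ((1 : ℝ), (0 : ℝ)) t :=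
  (hasDerivAt_id' t).prodMk (hasDerivAt_const t x)

lemma hasDerivAt_prodMk_right (t x : ℝ) : HasDerivAt (fun y => (t, y)) ((0 : ℝ), (1 : ℝ)) x :=
  (hasDerivAt_const x t).prodMk (hasDerivAt_id' x)

lemma hasDerivAt_fst_of_hasFDerivAt_uncurry {u' : ℝ × ℝ →L[ℝ] ℝ}
    (h : HasFDerivAt (Function.uncurry u) u' (t, x)) :
    HasDerivAt (fun s => u s x) (u' (1, 0)) t :=
  h.comp_hasDerivAt (f := fun s => (s, x)) t (hasDerivAt_prodMk_left t x)

lemma hasDerivAt_snd_of_hasFDerivAt_uncurry {u' : ℝ × ℝ →L[ℝ] ℝ}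
    (h : HasFDerivAt (Function.uncurry u) u' (t, x)) : HasDerivAt (u t) (u' (0, 1)) x :=
  h.comp_hasDerivAt (f := fun y => (t, y)) x (hasDerivAt_prodMk_right t x)

lemma continuousOn_deriv_snd {s : Set ℝ} (hs : UniqueDiffOn ℝ s)
    (hu : ContDiffOn ℝ 1 (Function.uncurry u) (s ×ˢ univ)) :
    ContinuousOn (Function.uncurry fun t x => deriv (u t) x) (s ×ˢ univ) := by
  have hcont := hu.continuousOn_fderivWithin (hs.prod uniqueDiffOn_univ) le_rfl
  refine (hcont.clm_apply (continuousOn_const (c := ((0 : ℝ), (1 : ℝ))))).congr ?_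
  rintro ⟨t, x⟩ ⟨ht, -⟩
  have hfderiv := (hu.differentiableOn one_ne_zero (t, x) ⟨ht, trivial⟩).hasFDerivWithinAt
  have hcomp := hfderiv.comp_hasDerivWithinAt (s := univ) x
    (hasDerivAt_prodMk_right t x).hasDerivWithinAt fun y _ => ⟨ht, trivial⟩
  exact (hasDerivWithinAt_univ.1 hcomp).deriv

lemma hasDerivAt_clm_apply_const {E F : Type*} [NormedAddCommGroup E] [NormedSpace ℝ E]
    [NormedAddCommGroup F] [NormedSpace ℝ F] {L : ℝ → E →L[ℝ] F} {L' : E →L[ℝ] F} {s : ℝ}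
    (hL : HasDerivAt L L' s) (e : E) : HasDerivAt (fun r => L r e) (L' e) s := by
  simpa using hL.clm_apply (hasDerivAt_const s e)

theorem hasDerivAt_deriv_snd_of_contDiffAt (hu : ContDiffAt ℝ 2 (Function.uncurry u) (t, x)) :
    HasDerivAt (fun s => deriv (u s) x) (deriv (fun y => deriv (fun s => u s y) t) x) t := by
  have hdiff : ∀ᶠ z in nhds (t, x),
      HasFDerivAt (Function.uncurry u) (fderiv ℝ (Function.uncurry u) z) z := by
    filter_upwards [hu.eventually (by simp)] with z hz
    exact (hz.differentiableAt two_ne_zero).hasFDerivAt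
  obtain ⟨u₂, hu₂⟩ := (hu.fderiv_right (m := 1) le_rfl).differentiableAt one_ne_zero
  have hsymm : u₂ (1, 0) (0, 1) = u₂ (0, 1) (1, 0) := by
    have := hu.isSymmSndFDerivAt (by simp)
    rw [IsSymmSndFDerivAt, hu₂.fderiv] at this
    exact this _ _
  have htx : HasDerivAt (fun s => deriv (u s) x) (u₂ (1, 0) (0, 1)) t := by
    have hcomp := hu₂.comp_hasDerivAt (f := fun s => (s, x)) t (hasDerivAt_prodMk_left t x)
    refine (hasDerivAt_clm_apply_const hcomp (0, 1)).congr_of_eventuallyEq ?_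
    filter_upwards [(hasDerivAt_prodMk_left t x).continuousAt.eventually hdiff] with s hs
    exact (hasDerivAt_snd_of_hasFDerivAt_uncurry hs).deriv
  have hxt : HasDerivAt (fun y => deriv (fun s => u s y) t) (u₂ (0, 1) (1, 0)) x := by
    have hcomp := hu₂.comp_hasDerivAt (f := fun y => (t, y)) x (hasDerivAt_prodMk_right t x)
    refine (hasDerivAt_clm_apply_const hcomp (1, 0)).congr_of_eventuallyEq ?_
    filter_upwards [(hasDerivAt_prodMk_right t x).continuousAt.eventually hdiff] with y hy
    exact (hasDerivAt_fst_of_hasFDerivAt_uncurry hy).deriv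
  rwa [hxt.deriv, ← hsymm]

end PartialDerivatives

/-! ### Increments of periodic functions with slope bounded above -/

lemma periodic_deriv {v : ℝ → ℝ} {c : ℝ} (hper : Function.Periodic v c) :
    Function.Periodic (deriv v) c := fun x => by
  rw [← deriv_comp_add_const, hper.funext]

section PeriodicIncrements

variable {v : ℝ → ℝ} {c D E ℓ p : ℝ}

lemma sub_le_mul_period_of_deriv_le (hv : Differentiable ℝ v) (hper : Function.Periodic v c)
    (hc : 0 < c) (hD : ∀ x, deriv v x ≤ D) (x y : ℝ) : v y - v x ≤ D * c := by
  have hincr : ∀ z, x ≤ z → v z - v x ≤ D * (z - x) := fun z hz =>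
    image_sub_le_mul_sub_of_deriv_le hv hD hz
  have hD0 : 0 ≤ D := by
    have := hincr (x + c) (by linarith)
    rw [hper x, sub_self, add_sub_cancel_left] at this
    exact nonneg_of_mul_nonneg_left this hc
  obtain ⟨z, ⟨hxz, hzx⟩, hyz⟩ := hper.exists_mem_Ico hc y x
  rw [hyz]
  exact (hincr z hxz).trans (mul_le_mul_of_nonneg_left (by linarith) hD0)

theorem abs_le_mul_period_of_integral_eq_zero (hv : Differentiable ℝ v)
    (hper : Function.Periodic v c) (hc : 0 < c) (hD : ∀ x, deriv v x ≤ D)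
    (hmean : ∫ x in 0..c, v x = 0) (y : ℝ) : |v y| ≤ D * c := by
  obtain ⟨z, -, hz⟩ := exists_eq_interval_average hc.ne hv.continuous.continuousOn
  rw [interval_average_eq, hmean, smul_zero] at hz
  have hupper := sub_le_mul_period_of_deriv_le hv hper hc hD z y
  have hlower := sub_le_mul_period_of_deriv_le hv hper hc hD y z
  exact abs_le.2 ⟨by linarith, by linarith⟩

lemma integral_increment_eq_zero (hv : Continuous v) (hper : Function.Periodic v c) (ℓ : ℝ) :
    ∫ x in 0..c, (v (x + ℓ) - v x) = 0 := by
  have hshift : ∫ x in 0..c, v (x + ℓ) = ∫ x in 0..c, v x := by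
    simpa [add_comm] using hper.intervalIntegral_add_eq ℓ 0
  rw [intervalIntegral.integral_sub (Continuous.intervalIntegrable (by fun_prop) _ _)
    (hv.intervalIntegrable _ _), hshift, sub_self]

-- `|d| ≤ 2 D ℓ - d` whenever `d ≤ D ℓ`, and increments have mean zero over a period.
lemma average_abs_increment_le (hv : Differentiable ℝ v) (hper : Function.Periodic v c)
    (hc : 0 < c) (hD : ∀ x, deriv v x ≤ D) (hℓ : 0 ≤ ℓ) :
    ⨍ x in 0..c, |v (x + ℓ) - v x| ≤ 2 * D * ℓ := by
  have hcont : Continuous v := hv.continuous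
  have hD0 : 0 ≤ D := by
    simpa [hc] using sub_le_mul_period_of_deriv_le hv hper hc hD 0 0
  have hpointwise : ∀ x, |v (x + ℓ) - v x| ≤ 2 * D * ℓ - (v (x + ℓ) - v x) := by
    intro x
    have hincr : v (x + ℓ) - v x ≤ D * ℓ := by
      simpa using image_sub_le_mul_sub_of_deriv_le hv hD (le_add_of_nonneg_right hℓ)
    have : 0 ≤ D * ℓ := mul_nonneg hD0 hℓ
    exact abs_le.2 ⟨by linarith, by linarith⟩
  rw [interval_average_eq_div, sub_zero, div_le_iff₀ hc]
  calc ∫ x in 0..c, |v (x + ℓ) - v x|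
      ≤ ∫ x in 0..c, (2 * D * ℓ - (v (x + ℓ) - v x)) :=
        intervalIntegral.integral_mono hc.le (Continuous.intervalIntegrable (by fun_prop) _ _)
          (Continuous.intervalIntegrable (by fun_prop) _ _) hpointwise
    _ = 2 * D * ℓ * c := by
        rw [intervalIntegral.integral_sub (Continuous.intervalIntegrable (by fun_prop) _ _)
          (Continuous.intervalIntegrable (by fun_prop) _ _), integral_increment_eq_zero hcont hper]
        simp only [intervalIntegral.integral_const, smul_eq_mul]
        ring

theorem average_abs_increment_rpow_le_of_le_one (hv : Differentiable ℝ v)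
    (hper : Function.Periodic v c) (hc : 0 < c) (hD : ∀ x, deriv v x ≤ D) (hℓ : 0 ≤ ℓ)
    (hp0 : 0 ≤ p) (hp1 : p ≤ 1) :
    ⨍ x in 0..c, |v (x + ℓ) - v x| ^ p ≤ (2 * D * ℓ) ^ p := by
  have hcont : Continuous fun x => |v (x + ℓ) - v x| := by have := hv.continuous; fun_prop
  have hjensen : ⨍ x in 0..c, |v (x + ℓ) - v x| ^ p ≤ (⨍ x in 0..c, |v (x + ℓ) - v x|) ^ p := by
    refine (Real.concaveOn_rpow hp0 hp1).le_map_set_average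
      (Real.continuous_rpow_const hp0).continuousOn isClosed_Ici (by simp [hc.ne']) (by simp)
      (Filter.Eventually.of_forall fun x => mem_Ici.2 (abs_nonneg _)) ?_ ?_
    · exact intervalIntegrable_iff.1 (hcont.intervalIntegrable 0 c)
    · exact intervalIntegrable_iff.1
        (((Real.continuous_rpow_const hp0).comp hcont).intervalIntegrable 0 c)
  refine hjensen.trans (Real.rpow_le_rpow ?_ (average_abs_increment_le hv hper hc hD hℓ) hp0)
  exact integral_nonneg fun x => abs_nonneg _

theorem average_abs_increment_rpow_le_of_one_le (hv : Differentiable ℝ v)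
    (hper : Function.Periodic v c) (hc : 0 < c) (hD : ∀ x, deriv v x ≤ D)
    (hE : ∀ x, |deriv v x| ≤ E) (hℓ : 0 ≤ ℓ) (hp : 1 ≤ p) :
    ⨍ x in 0..c, |v (x + ℓ) - v x| ^ p ≤ (E * ℓ) ^ (p - 1) * (2 * D * ℓ) := by
  have hcont : Continuous fun x => |v (x + ℓ) - v x| := by have := hv.continuous; fun_prop
  have hE0 : 0 ≤ E := (abs_nonneg _).trans (hE 0)
  have hlip : ∀ x, |v (x + ℓ) - v x| ≤ E * ℓ := fun x => by
    simpa [abs_of_nonneg hℓ] using convex_univ.norm_image_sub_le_of_norm_deriv_le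
      (fun y _ => hv y) (fun y _ => hE y) (mem_univ x) (mem_univ (x + ℓ))
  have hpointwise : ∀ x, |v (x + ℓ) - v x| ^ p ≤ (E * ℓ) ^ (p - 1) * |v (x + ℓ) - v x| := by
    intro x
    calc |v (x + ℓ) - v x| ^ p = |v (x + ℓ) - v x| ^ (p - 1) * |v (x + ℓ) - v x| := by
          rw [← Real.rpow_add_one' (abs_nonneg _) (by linarith), sub_add_cancel]
      _ ≤ (E * ℓ) ^ (p - 1) * |v (x + ℓ) - v x| :=
          mul_le_mul_of_nonneg_right (Real.rpow_le_rpow (abs_nonneg _) (hlip x) (by linarith))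
            (abs_nonneg _)
  calc ⨍ x in 0..c, |v (x + ℓ) - v x| ^ p
      ≤ ⨍ x in 0..c, (E * ℓ) ^ (p - 1) * |v (x + ℓ) - v x| := by
        simp only [interval_average_eq_div, sub_zero]
        gcongr
        exact intervalIntegral.integral_mono hc.le
          ((hcont.rpow_const fun _ => Or.inr (by linarith)).intervalIntegrable _ _)
          ((hcont.const_mul _).intervalIntegrable _ _) hpointwise
    _ = (E * ℓ) ^ (p - 1) * ⨍ x in 0..c, |v (x + ℓ) - v x| := by
        simp only [interval_average_eq_div, intervalIntegral.integral_const_mul, mul_div_assoc]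
    _ ≤ (E * ℓ) ^ (p - 1) * (2 * D * ℓ) := by
        gcongr
        exact average_abs_increment_le hv hper hc hD hℓ

end PeriodicIncrements

lemma norm_le_toReal_eLpNorm_top_of_periodic {F : Type*} [NormedAddCommGroup F] {v : ℝ → F}
    {c : ℝ} (hv : Continuous v) (hper : Function.Periodic v c) (hc : 0 < c) (x : ℝ) :
    ‖v x‖ ≤ (eLpNorm v ⊤ (volume.restrict (Ioc 0 c))).toReal := by
  obtain ⟨B, hB⟩ := (hper.isBounded_of_continuous hc.ne' hv).exists_norm_le
  have hmem : MemLp v ⊤ (volume.restrict (Ioc 0 c)) :=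
    memLp_top_of_bound hv.aestronglyMeasurable B
      (Filter.Eventually.of_forall fun y => hB _ (mem_range_self y))
  have hae := ae_le_lpNorm_exponent_top hmem
  rw [← toReal_eLpNorm hmem.aestronglyMeasurable] at hae
  set N := (eLpNorm v ⊤ (volume.restrict (Ioc 0 c))).toReal
  have hmax : (fun y => max ‖v y‖ N) =ᵐ[volume.restrict (Ioc 0 c)] fun _ => N :=
    hae.mono fun y hy => max_eq_right hy
  obtain ⟨y, hy, hxy⟩ := hper.exists_mem_Ioc hc x 0
  rw [zero_add] at hy
  rw [hxy]
  exact max_eq_right_iff.1 (Measure.eqOn_Ioc_of_ae_eq volume hmax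
    (by fun_prop) continuousOn_const hy)

/-! ### A priori bounds for solutions of the Burgers equation -/

/-- The flux `f(u) - ν uₓ` of the generalised Burgers equation, which then reads
`uₜ + ∂ₓ(flux) = 0`. -/
noncomputable def burgersFlux (f : ℝ → ℝ) (ν : ℝ) (u : ℝ → ℝ → ℝ) (t x : ℝ) : ℝ :=
  f (u t x) - ν * deriv (u t) x

/-- The constant `2 sup_{[-D, D]} |f| + D` for which `|uₓ| ≤ burgersSlopeConst f D / ν` when
`ν ≤ 1` and `D = burgersD u`. -/
noncomputable def burgersSlopeConst (f : ℝ → ℝ) (D : ℝ) : ℝ :=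
  2 * sSup ((fun y => |f y|) '' Icc (-D) D) + D

namespace IsBurgersSolution

variable {f : ℝ → ℝ} {σ ν : ℝ} {u : ℝ → ℝ → ℝ} {t : ℝ}

lemma contDiff_slice (h : IsBurgersSolution f σ ν u) (ht : 0 ≤ t) :
    ContDiff ℝ (⊤ : ℕ∞) (u t) :=
  h.hu.comp_contDiff (f := fun x => (t, x)) (by fun_prop) fun _ => ⟨ht, trivial⟩

lemma contDiff_deriv_slice (h : IsBurgersSolution f σ ν u) (ht : 0 ≤ t) :
    ContDiff ℝ (⊤ : ℕ∞) (deriv (u t)) :=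
  (contDiff_infty_iff_deriv.1 (h.contDiff_slice ht)).2

lemma differentiable_slice (h : IsBurgersSolution f σ ν u) (ht : 0 ≤ t) :
    Differentiable ℝ (u t) :=
  (h.contDiff_slice ht).differentiable (by simp)

lemma differentiable_deriv_slice (h : IsBurgersSolution f σ ν u) (ht : 0 ≤ t) :
    Differentiable ℝ (deriv (u t)) :=
  (h.contDiff_deriv_slice ht).differentiable (by simp)

lemma contDiffAt_uncurry (h : IsBurgersSolution f σ ν u) (ht : 0 < t) (x : ℝ) :
    ContDiffAt ℝ (⊤ : ℕ∞) (Function.uncurry u) (t, x) :=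
  h.hu.contDiffAt (prod_mem_nhds (Ici_mem_nhds ht) Filter.univ_mem)

lemma continuousOn_slope (h : IsBurgersSolution f σ ν u) :
    ContinuousOn (Function.uncurry fun t x => deriv (u t) x) (Ici 0 ×ˢ univ) :=
  continuousOn_deriv_snd (uniqueDiffOn_Ici 0) (h.hu.of_le (by simp))

lemma hasDerivAt_flux (h : IsBurgersSolution f σ ν u) (ht : 0 < t) (x : ℝ) :
    HasDerivAt (burgersFlux f ν u t) (-deriv (fun s => u s x) t) x := by
  have hf : HasDerivAt f (deriv f (u t x)) (u t x) :=
    (h.hf.differentiable (by simp) _).hasDerivAt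
  have hflux := (hf.comp x (h.differentiable_slice ht.le x).hasDerivAt).sub
    ((h.differentiable_deriv_slice ht.le x).hasDerivAt.const_mul ν)
  have hval : -deriv (fun s => u s x) t =
      deriv f (u t x) * deriv (u t) x - ν * deriv (deriv (u t)) x := by
    linarith [h.hpde t ht x]
  rw [hval]
  exact hflux

lemma hasDerivAt_slope (h : IsBurgersSolution f σ ν u) (ht : 0 < t) (x : ℝ) :
    HasDerivAt (fun s => deriv (u s) x) (-deriv (deriv (burgersFlux f ν u t)) x) t := by
  have hflux : deriv (burgersFlux f ν u t) = fun y => -deriv (fun s => u s y) t :=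
    funext fun y => (h.hasDerivAt_flux ht y).deriv
  rw [hflux, deriv.fun_neg, neg_neg]
  exact hasDerivAt_deriv_snd_of_contDiffAt
    ((h.contDiffAt_uncurry ht x).of_le (by norm_cast))

lemma deriv_deriv_flux_nonneg_of_isLocalMax_slope (h : IsBurgersSolution f σ ν u) (ht : 0 ≤ t)
    {x : ℝ} (hmax : IsLocalMax (deriv (u t)) x) :
    0 ≤ deriv (deriv (burgersFlux f ν u t)) x := by
  have hf := contDiff_infty_iff_deriv.1 h.hf
  have hu : ∀ y, HasDerivAt (u t) (deriv (u t) y) y := fun y =>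
    (h.differentiable_slice ht y).hasDerivAt
  have hux : ∀ y, HasDerivAt (deriv (u t)) (deriv (deriv (u t)) y) y := fun y =>
    (h.differentiable_deriv_slice ht y).hasDerivAt
  have huxx : HasDerivAt (deriv (deriv (u t))) (deriv (deriv (deriv (u t))) x) x :=
    ((contDiff_infty_iff_deriv.1 (h.contDiff_deriv_slice ht)).2.differentiable
      (by simp) x).hasDerivAt
  have hflux : deriv (burgersFlux f ν u t) =
      fun y => deriv f (u t y) * deriv (u t) y - ν * deriv (deriv (u t)) y := funext fun y =>
    (((hf.1 (u t y)).hasDerivAt.comp y (hu y)).sub ((hux y).const_mul ν)).deriv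
  have hflux' := ((((hf.2.differentiable (by simp) (u t x)).hasDerivAt.comp x (hu x)).mul
    (hux x)).sub (huxx.const_mul ν)).deriv
  have hconv : 0 ≤ deriv (deriv f) (u t x) := by
    have := h.hσ.le.trans (h.hconv (u t x))
    rwa [iteratedDeriv_succ, iteratedDeriv_one] at this
  rw [hflux]
  refine le_of_le_of_eq ?_ hflux'.symm
  rw [hmax.deriv_eq_zero, mul_zero, add_zero, mul_assoc]
  have hdiff : ν * deriv (deriv (deriv (u t))) x ≤ 0 :=
    mul_nonpos_of_nonneg_of_nonpos h.hν.le
      (deriv_deriv_nonpos_of_isLocalMax hmax (hux x).continuousAt)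
  linarith [mul_nonneg hconv (mul_self_nonneg (deriv (u t) x))]

theorem slope_le_of_initial (h : IsBurgersSolution f σ ν u) {M : ℝ}
    (hM : ∀ x, deriv (u 0) x ≤ M) (ht : 0 ≤ t) (x : ℝ) : deriv (u t) x ≤ M :=
  le_of_deriv_nonpos_at_isLocalMax (w := fun t x => deriv (u t) x) one_pos
    h.continuousOn_slope (fun t => periodic_deriv (h.hper t))
    (fun _ hs y hy => ⟨_, neg_nonpos.2 (h.deriv_deriv_flux_nonneg_of_isLocalMax_slope hs.le hy),
      h.hasDerivAt_slope hs y⟩) hM ht x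

theorem flux_le_of_initial (h : IsBurgersSolution f σ ν u) {M : ℝ}
    (hM : ∀ x, burgersFlux f ν u 0 x ≤ M) (ht : 0 ≤ t) (x : ℝ) : burgersFlux f ν u t x ≤ M := by
  refine le_of_deriv_nonpos_at_isLocalMax one_pos ?_ ?_ (fun s hs y hmax => ?_) hM ht x
  · exact (h.hf.continuous.comp_continuousOn h.hu.continuousOn).sub
      (h.continuousOn_slope.const_mul ν)
  · exact fun s y => by simp only [burgersFlux, h.hper s y, periodic_deriv (h.hper s) y]
  · have hut : HasDerivAt (fun r => u r y) 0 s := by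
      have hzero := neg_eq_zero.1 (hmax.hasDerivAt_eq_zero (h.hasDerivAt_flux hs y))
      rw [← hzero]
      exact (hasDerivAt_fst_of_hasFDerivAt_uncurry ((h.contDiffAt_uncurry hs y).differentiableAt
        (by simp)).hasFDerivAt).differentiableAt.hasDerivAt
    have hf : HasDerivAt f (deriv f (u s y)) (u s y) :=
      (h.hf.differentiable (by simp) _).hasDerivAt
    refine ⟨_, ?_, (hf.comp s hut).sub ((h.hasDerivAt_slope hs y).const_mul ν)⟩
    have hconcave := deriv_deriv_nonpos_of_isLocalMax hmax (h.hasDerivAt_flux hs y).continuousAt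
    linarith [mul_nonneg h.hν.le (neg_nonneg.2 hconcave)]

lemma abs_deriv_initial_le (h : IsBurgersSolution f σ ν u) (x : ℝ) :
    |deriv (u 0) x| ≤ burgersD u := by
  refine le_trans ?_ (le_max_right _ _)
  rw [sobLp, iteratedDeriv_one]
  exact norm_le_toReal_eLpNorm_top_of_periodic (h.contDiff_deriv_slice le_rfl).continuous
    (periodic_deriv (h.hper 0)) one_pos x

theorem slope_le (h : IsBurgersSolution f σ ν u) (ht : 0 ≤ t) (x : ℝ) :
    deriv (u t) x ≤ burgersD u :=
  h.slope_le_of_initial (fun y => (abs_le.1 (h.abs_deriv_initial_le y)).2) ht x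

theorem abs_le_burgersD (h : IsBurgersSolution f σ ν u) (ht : 0 ≤ t) (x : ℝ) :
    |u t x| ≤ burgersD u := by
  have hmean : ∫ y in 0..1, u t y = 0 := by
    rw [intervalIntegral.integral_of_le zero_le_one, h.hmean t ht]
  simpa using abs_le_mul_period_of_integral_eq_zero (h.differentiable_slice ht) (h.hper t)
    one_pos (h.slope_le ht) hmean x

lemma burgersD_pos (h : IsBurgersSolution f σ ν u) : 0 < burgersD u := by
  obtain ⟨x, hx⟩ := h.hinit
  exact (abs_pos.2 hx).trans_le (h.abs_le_burgersD le_rfl x)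

lemma abs_comp_le_sSup (h : IsBurgersSolution f σ ν u) (ht : 0 ≤ t) (x : ℝ) :
    |f (u t x)| ≤ sSup ((fun y => |f y|) '' Icc (-burgersD u) (burgersD u)) :=
  le_csSup (isCompact_Icc.bddAbove_image h.hf.continuous.abs.continuousOn)
    (mem_image_of_mem _ (abs_le.1 (h.abs_le_burgersD ht x)))

theorem abs_slope_le_div (h : IsBurgersSolution f σ ν u) (hν : ν ≤ 1) (ht : 0 ≤ t) (x : ℝ) :
    |deriv (u t) x| ≤ burgersSlopeConst f (burgersD u) / ν := by
  set K := sSup ((fun y => |f y|) '' Icc (-burgersD u) (burgersD u)) with hK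
  have hf : ∀ s, 0 ≤ s → ∀ y, |f (u s y)| ≤ K := fun s hs y => h.abs_comp_le_sSup hs y
  have hscale : ∀ {a}, a ≤ burgersD u → ν * a ≤ burgersD u := fun ha =>
    (mul_le_mul_of_nonneg_left ha h.hν.le).trans (mul_le_of_le_one_left h.burgersD_pos.le hν)
  have hflux : burgersFlux f ν u t x ≤ K + burgersD u := by
    refine h.flux_le_of_initial (fun y => ?_) ht x
    have hfy := (abs_le.1 (hf 0 le_rfl y)).2
    have hslope := hscale ((neg_le_abs _).trans (h.abs_deriv_initial_le y))
    rw [burgersFlux]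
    linarith
  rw [burgersFlux] at hflux
  have hfx := (abs_le.1 (hf t ht x)).1
  have hK0 : 0 ≤ K := (abs_nonneg _).trans (hf t ht x)
  have habs : |deriv (u t) x| * ν = |ν * deriv (u t) x| := by
    rw [abs_mul, abs_of_pos h.hν, mul_comm]
  rw [le_div_iff₀ h.hν, habs, burgersSlopeConst, ← hK]
  exact abs_le.2 ⟨by linarith, by linarith [hscale (h.slope_le ht x)]⟩

end IsBurgersSolution

/-! ### Structure functions -/

lemma timeAvg_le {T₁ T₂ B : ℝ} {A : ℝ → ℝ} (hT : T₁ < T₂) (hA : ∀ t ∈ Ioc T₁ T₂, |A t| ≤ B) :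
    timeAvg T₁ T₂ A ≤ B := by
  have hint : ‖∫ t in T₁..T₂, A t‖ ≤ B * |T₂ - T₁| :=
    intervalIntegral.norm_integral_le_of_norm_le_const fun t ht =>
      hA t (by rwa [uIoc_of_le hT.le] at ht)
  rw [abs_of_pos (sub_pos.2 hT)] at hint
  rw [timeAvg, inv_mul_le_iff₀ (sub_pos.2 hT), mul_comm]
  exact (le_abs_self _).trans hint

lemma structFun_le {T₁ T₂ B p ℓ : ℝ} {u : ℝ → ℝ → ℝ} (hT : T₁ < T₂)
    (hB : ∀ t ∈ Ioc T₁ T₂, ⨍ x in 0..1, |u t (x + ℓ) - u t x| ^ p ≤ B) :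
    structFun T₁ T₂ u p ℓ ≤ B := by
  refine timeAvg_le hT fun t ht => ?_
  have h := hB t ht
  rw [interval_average_eq_div, sub_zero, div_one,
    intervalIntegral.integral_of_le zero_le_one] at h
  rwa [abs_of_nonneg (integral_nonneg fun x => by positivity)]

namespace IsBurgersSolution

variable {f : ℝ → ℝ} {σ ν : ℝ} {u : ℝ → ℝ → ℝ} {T₁ T₂ ℓ p : ℝ}

theorem structFun_le_of_le_one (h : IsBurgersSolution f σ ν u) (hT₁ : 0 ≤ T₁) (hT : T₁ < T₂)
    (hℓ : 0 ≤ ℓ) (hp0 : 0 ≤ p) (hp1 : p ≤ 1) :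
    structFun T₁ T₂ u p ℓ ≤ (2 * burgersD u) ^ p * ℓ ^ p := by
  rw [← Real.mul_rpow (mul_nonneg zero_le_two h.burgersD_pos.le) hℓ]
  refine structFun_le hT fun t ht => ?_
  have ht0 : 0 ≤ t := hT₁.trans ht.1.le
  exact average_abs_increment_rpow_le_of_le_one (h.differentiable_slice ht0) (h.hper t) one_pos
    (h.slope_le ht0) hℓ hp0 hp1

theorem structFun_le_of_one_le (h : IsBurgersSolution f σ ν u) (hν : ν ≤ 1) (hT₁ : 0 ≤ T₁)
    (hT : T₁ < T₂) (hℓ : 0 ≤ ℓ) (hp : 1 ≤ p) :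
    structFun T₁ T₂ u p ℓ ≤
      burgersSlopeConst f (burgersD u) ^ (p - 1) * (2 * burgersD u) *
        (ℓ ^ p * ν ^ (-(p - 1))) := by
  set E := burgersSlopeConst f (burgersD u)
  have hE : 0 ≤ E := by
    have := (abs_nonneg _).trans (h.abs_slope_le_div hν hT₁ 0)
    rwa [le_div_iff₀ h.hν, zero_mul] at this
  refine structFun_le hT fun t ht => ?_
  have ht0 : 0 ≤ t := hT₁.trans ht.1.le
  calc ⨍ x in 0..1, |u t (x + ℓ) - u t x| ^ p
      ≤ (E / ν * ℓ) ^ (p - 1) * (2 * burgersD u * ℓ) :=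
        average_abs_increment_rpow_le_of_one_le (h.differentiable_slice ht0) (h.hper t) one_pos
          (h.slope_le ht0) (h.abs_slope_le_div hν ht0) hℓ hp
    _ = E ^ (p - 1) * (2 * burgersD u) * (ℓ ^ (p - 1) * ℓ * ν ^ (-(p - 1))) := by
        rw [Real.mul_rpow (div_nonneg hE h.hν.le) hℓ, Real.div_rpow hE h.hν.le,
          Real.rpow_neg h.hν.le]
        ring
    _ = E ^ (p - 1) * (2 * burgersD u) * (ℓ ^ p * ν ^ (-(p - 1))) := by
        rw [← Real.rpow_add_one' hℓ (by linarith), sub_add_cancel]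

end IsBurgersSolution

lemma burgersT₁_pos {D Ct : ℝ} (hD : 0 < D) (hCt : 0 < Ct) : 0 < burgersT₁ D Ct := by
  unfold burgersT₁
  positivity

lemma burgersT₁_lt_burgersT₂ {D Ct : ℝ} (σ : ℝ) (hD : 0 < D) (hCt : 0 < Ct) :
    burgersT₁ D Ct < burgersT₂ σ D Ct :=
  lt_max_of_lt_left (by linarith [burgersT₁_pos hD hCt])

theorem statement13_general (f : ℝ → ℝ) (D p : ℝ) (hp : 0 ≤ p) :
    ∃ C > 0, ∀ σ ν, ν ≤ 1 →
      ∀ u : ℝ → ℝ → ℝ, IsBurgersSolution f σ ν u → burgersD u = D →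
        ∀ T₁ T₂, 0 ≤ T₁ → T₁ < T₂ → ∀ ℓ, 0 ≤ ℓ →
          (p ≤ 1 → structFun T₁ T₂ u p ℓ ≤ C * ℓ ^ p) ∧
          (1 ≤ p → structFun T₁ T₂ u p ℓ ≤ C * (ℓ ^ p * ν ^ (-(p - 1)))) := by
  set Clow := (2 * D) ^ p
  set Chigh := burgersSlopeConst f D ^ (p - 1) * (2 * D)
  refine ⟨max 1 (max Clow Chigh), lt_max_of_lt_left one_pos, ?_⟩
  rintro σ ν hν u h rfl T₁ T₂ hT₁ hT ℓ hℓ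
  have := h.hν
  constructor
  · intro hp1
    refine (h.structFun_le_of_le_one hT₁ hT hℓ hp hp1).trans ?_
    gcongr
    exact (le_max_left _ _).trans (le_max_right _ _)
  · intro hp1
    refine (h.structFun_le_of_one_le hν hT₁ hT hℓ hp1).trans ?_
    gcongr
    exact (le_max_right _ _).trans (le_max_right _ _)

/-- For every `p ≥ 0` there is `C > 0` depending only on `f`,
`D`, `p` such that for every `ν ∈ (0,1]` and every `ℓ ∈ (0,1]`,
`S_p(ℓ) ≤ C ℓ^p` if `0 ≤ p ≤ 1`, and `S_p(ℓ) ≤ C ℓ^p ν^{-(p-1)}` if `p ≥ 1`. -/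
theorem statement13 (f : ℝ → ℝ) (σ D Ct : ℝ) (hCt : 0 < Ct)
    (hCtb : ∀ ν, 0 < ν → ν ≤ 1 →
      ∀ u : ℝ → ℝ → ℝ, IsBurgersSolution f σ ν u → burgersD u = D →
        ∀ t, 0 ≤ t → sobLp 1 2 (u t) ^ 2 ≤ Ct * ν⁻¹)
    (p : ℝ) (hp : 0 ≤ p) :
    ∃ C > 0, ∀ ν, 0 < ν → ν ≤ 1 →
      ∀ u : ℝ → ℝ → ℝ, IsBurgersSolution f σ ν u → burgersD u = D →
        ∀ ℓ, 0 < ℓ → ℓ ≤ 1 →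
          (p ≤ 1 →
            structFun (burgersT₁ D Ct) (burgersT₂ σ D Ct) u p ℓ ≤ C * ℓ ^ p) ∧
          (1 ≤ p →
            structFun (burgersT₁ D Ct) (burgersT₂ σ D Ct) u p ℓ
              ≤ C * (ℓ ^ p * ν ^ (-(p - 1)))) := by
  obtain ⟨C, hC, hbound⟩ := statement13_general f D p hp
  exact ⟨C, hC, fun ν _ hν u h hD ℓ hℓ _ => hbound σ ν hν u h hD _ _
    (burgersT₁_pos (hD ▸ h.burgersD_pos) hCt).le
    (burgersT₁_lt_burgersT₂ σ (hD ▸ h.burgersD_pos) hCt) ℓ hℓ.le⟩
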